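/- Non-uniform Łojasiewicz inequality: for the tabular softmax policy π_θ(a|s) = exp(θ(s,a))/Σ_{a'} exp(θ(s,a')) on a finite γ-discounted MDP with rewards in [0,1], for any fully supported distributions μ and ρ on S, ‖∇_θ V^{π_θ}(μ)‖₂ ≥ (min_{s∈S} π_θ(a*(s)|s))·‖d_ρ^{π*}/d_μ^{π_θ}‖_∞^{-1}·(V*(ρ) − V^{π_θ}(ρ))/√|S|, where ‖d_ρ^{π*}/d_μ^{π_θ}‖_∞ = max_{s∈S} d_ρ^{π*}(s)/d_μ^{π_θ}(s). -/

import Mathlib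

open Finset MeasureTheory
open scoped BigOperators Classical

noncomputable section

/-- Softmax policy with parameter `θ`. -/
def softmaxPol {S A : Type*} [Fintype A] (θ : S → A → ℝ) (s : S) (a : A) : ℝ :=
  Real.exp (θ s a) / ∑ a' : A, Real.exp (θ s a')

/-- Global product softmax policy. -/
def gPolicy {N : ℕ} {S A : Fin N → Type*} [∀ n, Fintype (A n)]
    (θ : ∀ n, S n → A n → ℝ) (s : ∀ n, S n) (a : ∀ n, A n) : ℝ :=
  ∏ n, softmaxPol (θ n) (s n) (a n)

/-- Global product transition kernel. -/
def gKernel {N : ℕ} {S A : Fin N → Type*} (P : ∀ n, S n → A n → S n → ℝ)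
    (s : ∀ n, S n) (a : ∀ n, A n) (s' : ∀ n, S n) : ℝ :=
  ∏ n, P n (s n) (a n) (s' n)

/-- Distribution of the state at time `t` under kernel `K`, policy `p`,
initial state distribution `ρ`. -/
def stateDist {GS GA : Type*} [Fintype GS] [Fintype GA]
    (K : GS → GA → GS → ℝ) (p : GS → GA → ℝ) (ρ : GS → ℝ) : ℕ → GS → ℝ
  | 0 => ρ
  | t + 1 => fun s' => ∑ s : GS, ∑ a : GA, stateDist K p ρ t s * p s a * K s a s'

/-- Expected reward at time `t`. -/
def expReward {GS GA : Type*} [Fintype GS] [Fintype GA]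
    (K : GS → GA → GS → ℝ) (p : GS → GA → ℝ) (R : GS → GA → ℝ) (ρ : GS → ℝ) (t : ℕ) : ℝ :=
  ∑ s : GS, ∑ a : GA, stateDist K p ρ t s * p s a * R s a

/-- Expected discounted reward with initial state distribution `ρ`:
`V^p(ρ) = E[∑_t γ^t R(s(t),a(t)) | s(0) ∼ ρ]`. -/
def valueD {GS GA : Type*} [Fintype GS] [Fintype GA] (γ : ℝ)
    (K : GS → GA → GS → ℝ) (p : GS → GA → ℝ) (R : GS → GA → ℝ) (ρ : GS → ℝ) : ℝ :=
  ∑' t : ℕ, γ ^ t * expReward K p R ρ t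

/-- Point mass at `s0`. -/
def diracD {GS : Type*} (s0 : GS) : GS → ℝ := fun s => if s = s0 then 1 else 0

/-- State value function `V^p(s)`. -/
def valueV {GS GA : Type*} [Fintype GS] [Fintype GA] (γ : ℝ)
    (K : GS → GA → GS → ℝ) (p : GS → GA → ℝ) (R : GS → GA → ℝ) (s0 : GS) : ℝ :=
  valueD γ K p R (diracD s0)

/-- State-action value function `Q^p(s,a) = R(s,a) + γ E_{s' ∼ K(⬝|s,a)}[V^p(s')]`. -/
def valueQ {GS GA : Type*} [Fintype GS] [Fintype GA] (γ : ℝ)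
    (K : GS → GA → GS → ℝ) (p : GS → GA → ℝ) (R : GS → GA → ℝ) (s0 : GS) (a0 : GA) : ℝ :=
  R s0 a0 + γ * ∑ s' : GS, K s0 a0 s' * valueV γ K p R s'

/-- Discounted state occupancy measure `d_ρ^p(s)`. -/
def occup {GS GA : Type*} [Fintype GS] [Fintype GA] (γ : ℝ)
    (K : GS → GA → GS → ℝ) (p : GS → GA → ℝ) (ρ : GS → ℝ) (s : GS) : ℝ :=
  (1 - γ) * ∑' t : ℕ, γ ^ t * stateDist K p ρ t s

/-- Deterministic policy associated with an action-selection map. -/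
def detPol {GS GA : Type*} (f : GS → GA) : GS → GA → ℝ :=
  fun s a => if a = f s then 1 else 0

/-- Squared Euclidean norm of a multi-agent parameter vector. -/
def sqNorm {N : ℕ} {S A : Fin N → Type*} [∀ n, Fintype (S n)] [∀ n, Fintype (A n)]
    (ν : ∀ n, S n → A n → ℝ) : ℝ :=
  ∑ n, ∑ s, ∑ a, (ν n s a) ^ 2

/-- Euclidean norm of a multi-agent parameter vector. -/
def eucNorm {N : ℕ} {S A : Fin N → Type*} [∀ n, Fintype (S n)] [∀ n, Fintype (A n)]
    (ν : ∀ n, S n → A n → ℝ) : ℝ :=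
  Real.sqrt (sqNorm ν)

end

/-!
Let `T` be the state transition matrix induced by a policy `p`. The discounted occupancy is
`(1 - γ) • μ ᵥ* (1 - γ • T)⁻¹` and the value function is `(1 - γ • T)⁻¹ *ᵥ r_p`, so the performance
difference identity
`V^p(μ) - V^q(μ) = (1 - γ)⁻¹ ∑ₛ d_μ^p(s) ∑ₐ p(a|s) A^q(s,a)`
is linear algebra. Letting `p` approach `q` in it gives the policy gradient theorem, because the
inner sum vanishes at `p = q` and `d_μ^p` is continuous in `p`. For softmax policies the partial
derivative in `θ(s,a)` is `(1 - γ)⁻¹ d_μ(s) π_θ(a|s) A(s,a)`. Taking `p = π*` instead expresses the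
suboptimality gap through the advantages of the actions `a*(s)`; comparing the two term by term and
applying Cauchy–Schwarz over the states gives the inequality.
-/

section Finite

open Matrix

lemma sum_abs_apply_le_sqrt_card_mul_sqrt {ι κ : Type*} [Fintype ι] [Fintype κ]
    (g : ι → κ → ℝ) (f : ι → κ) :
    ∑ i, |g i (f i)| ≤ √(Fintype.card ι) * √(∑ i, ∑ k, g i k ^ 2) := by
  rw [← Real.sqrt_mul (Nat.cast_nonneg _)]
  apply Real.le_sqrt_of_sq_le
  calc (∑ i, |g i (f i)|) ^ 2 ≤ Fintype.card ι * ∑ i, |g i (f i)| ^ 2 :=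
        sq_sum_le_card_mul_sum_sq
    _ ≤ Fintype.card ι * ∑ i, ∑ k, g i k ^ 2 := by
        gcongr with i
        rw [sq_abs]
        exact single_le_sum (f := fun k => g i k ^ 2) (fun k _ => sq_nonneg _) (mem_univ _)

lemma inv_iSup_div_mul_le {ι : Type*} [Finite ι] {d e : ι → ℝ} (hd : ∀ i, 0 ≤ d i)
    (he : ∀ i, 0 < e i) (i : ι) : (⨆ j, d j / e j)⁻¹ * d i ≤ e i := by
  have hi : d i / e i ≤ ⨆ j, d j / e j :=
    le_ciSup (f := fun j => d j / e j) (Set.finite_range _).bddAbove i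
  exact inv_mul_le_of_le_mul₀ ((div_nonneg (hd i) (he i).le).trans hi) (he i).le
    ((div_le_iff₀ (he i)).1 hi)

section RowStochastic

variable {n : Type*} [Fintype n] [DecidableEq n] {M : Matrix n n ℝ} {γ : ℝ}

attribute [local instance] Matrix.linftyOpNormedRing Matrix.linftyOpNormedAlgebra

lemma linfty_opNorm_le_one_of_mem_rowStochastic (hM : M ∈ rowStochastic ℝ n) : ‖M‖ ≤ 1 := by
  rw [← coe_nnnorm, ← NNReal.coe_one, NNReal.coe_le_coe, linfty_opNNNorm_def]
  refine Finset.sup_le fun i _ => NNReal.coe_le_coe.1 ?_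
  push_cast
  simp_rw [Real.norm_of_nonneg (nonneg_of_mem_rowStochastic hM), sum_row_of_mem_rowStochastic hM i]
  exact le_rfl

lemma linfty_opNorm_smul_lt_one_of_mem_rowStochastic (hM : M ∈ rowStochastic ℝ n) (hγ : |γ| < 1) :
    ‖γ • M‖ < 1 := by
  rw [norm_smul, Real.norm_eq_abs]
  exact (mul_le_of_le_one_right (abs_nonneg γ)
    (linfty_opNorm_le_one_of_mem_rowStochastic hM)).trans_lt hγ

lemma isUnit_one_sub_smul_of_mem_rowStochastic (hM : M ∈ rowStochastic ℝ n) (hγ : |γ| < 1) :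
    IsUnit (1 - γ • M) :=
  isUnit_one_sub_of_norm_lt_one (linfty_opNorm_smul_lt_one_of_mem_rowStochastic hM hγ)

lemma hasSum_pow_mul_vecMul_pow_dotProduct (hM : M ∈ rowStochastic ℝ n) (hγ : |γ| < 1)
    (v w : n → ℝ) :
    HasSum (fun t : ℕ => γ ^ t * (v ᵥ* M ^ t ⬝ᵥ w)) (v ᵥ* (1 - γ • M)⁻¹ ⬝ᵥ w) := by
  have hseries : HasSum (fun t : ℕ => (γ • M) ^ t) (1 - γ • M)⁻¹ := by
    rw [nonsing_inv_eq_ringInverse]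
    exact hasSum_geom_series_inverse _ (linfty_opNorm_smul_lt_one_of_mem_rowStochastic hM hγ)
  let φ : Matrix n n ℝ →+ ℝ :=
    { toFun N := v ᵥ* N ⬝ᵥ w
      map_zero' := by simp
      map_add' N₁ N₂ := by rw [vecMul_add, add_dotProduct] }
  have hφ : Continuous φ := (continuous_const.matrix_vecMul continuous_id).dotProduct
    continuous_const
  simpa [φ, Function.comp_def, smul_pow, vecMul_smul] using hseries.map φ hφ

end RowStochastic

end Finite

section Derivative

variable {𝕜 E F : Type*} [NontriviallyNormedField 𝕜] [NormedAddCommGroup E] [NormedSpace 𝕜 E]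
  [NormedAddCommGroup F] [NormedSpace 𝕜 F]

lemma hasFDerivAt_smul_of_eq_zero {c : E → 𝕜} {f : E → F} {f' : E →L[𝕜] F} {x : E}
    (hc : ContinuousAt c x) (hf : HasFDerivAt f f' x) (hfx : f x = 0) :
    HasFDerivAt (fun y => c y • f y) (c x • f') x := by
  rw [hasFDerivAt_iff_isLittleO]
  have hc' : (fun y => c y - c x) =o[nhds x] fun _ => (1 : 𝕜) :=
    (Asymptotics.isLittleO_one_iff 𝕜).2 (tendsto_sub_nhds_zero_iff.2 hc)
  have hf_bigO : f =O[nhds x] fun y => y - x := by simpa [hfx] using hf.isBigO_sub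
  have hprod : (fun y => (c y - c x) • f y) =o[nhds x] fun y => y - x := by
    simpa using hc'.smul_isBigO hf_bigO
  refine (((hasFDerivAt_iff_isLittleO.1 hf).const_smul_left (c x)).add hprod).congr_left
    fun y => ?_
  simp only [hfx, smul_apply, smul_sub, sub_smul, Pi.smul_apply, smul_zero]
  abel

end Derivative

section Occupancy

open Matrix

variable {S A : Type*} [Fintype S] [Fintype A]

/-- The state transition matrix of the Markov chain obtained by following the policy `p` in the
controlled chain with kernel `P`; rows are indexed by the current state. -/
def transitionMatrix (P : S → A → S → ℝ) (p : S → A → ℝ) : Matrix S S ℝ :=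
  .of fun s s' => ∑ a, p s a * P s a s'

/-- The advantage function `A^p(s,a) = Q^p(s,a) - V^p(s)`, the gain from playing `a` once in state
`s` before following the policy `p`. -/
noncomputable def advantage (γ : ℝ) (P : S → A → S → ℝ) (p r : S → A → ℝ) (s : S) (a : A) : ℝ :=
  valueQ γ P p r s a - valueV γ P p r s

variable {γ : ℝ} {P : S → A → S → ℝ} {p q r : S → A → ℝ} {μ : S → ℝ}

lemma transitionMatrix_mem_rowStochastic (hP : ∀ s a, P s a ∈ stdSimplex ℝ S)
    (hp : ∀ s, p s ∈ stdSimplex ℝ A) : transitionMatrix P p ∈ rowStochastic ℝ S := by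
  refine mem_rowStochastic_iff_sum.2 ⟨fun s s' => sum_nonneg fun a _ =>
    mul_nonneg ((hp s).1 a) ((hP s a).1 s'), fun s => ?_⟩
  simp only [transitionMatrix, of_apply]
  rw [sum_comm]
  simp_rw [← mul_sum, (hP s _).2, mul_one, (hp s).2]

lemma transitionMatrix_mulVec (v : S → ℝ) (s : S) :
    (transitionMatrix P p *ᵥ v) s = p s ⬝ᵥ fun a => P s a ⬝ᵥ v := by
  simp only [transitionMatrix, mulVec, dotProduct, of_apply, sum_mul, mul_sum, mul_assoc]
  exact sum_comm

lemma stateDist_eq_vecMul_pow (t : ℕ) : stateDist P p μ t = μ ᵥ* transitionMatrix P p ^ t := by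
  induction t with
  | zero => simp [stateDist]
  | succ t ih =>
    rw [pow_succ, ← vecMul_vecMul, ← ih]
    ext s'
    simp only [stateDist, vecMul, dotProduct, transitionMatrix, of_apply, mul_sum, mul_assoc]

lemma expReward_eq_dotProduct (t : ℕ) :
    expReward P p r μ t = stateDist P p μ t ⬝ᵥ fun s => p s ⬝ᵥ r s := by
  simp [expReward, dotProduct, mul_sum, mul_assoc]

lemma hasSum_stateDist (hP : ∀ s a, P s a ∈ stdSimplex ℝ S) (hp : ∀ s, p s ∈ stdSimplex ℝ A)
    (hγ : |γ| < 1) (μ : S → ℝ) (s : S) :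
    HasSum (fun t => γ ^ t * stateDist P p μ t s) ((μ ᵥ* (1 - γ • transitionMatrix P p)⁻¹) s) := by
  simpa [stateDist_eq_vecMul_pow] using hasSum_pow_mul_vecMul_pow_dotProduct
    (transitionMatrix_mem_rowStochastic hP hp) hγ μ (Pi.single s 1)

lemma occup_eq_vecMul_inv (hP : ∀ s a, P s a ∈ stdSimplex ℝ S) (hp : ∀ s, p s ∈ stdSimplex ℝ A)
    (hγ : |γ| < 1) :
    occup γ P p μ = (1 - γ) • (μ ᵥ* (1 - γ • transitionMatrix P p)⁻¹) := by
  ext s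
  rw [occup, (hasSum_stateDist hP hp hγ μ s).tsum_eq, Pi.smul_apply, smul_eq_mul]

lemma valueD_eq_vecMul_inv_dotProduct (hP : ∀ s a, P s a ∈ stdSimplex ℝ S)
    (hp : ∀ s, p s ∈ stdSimplex ℝ A) (hγ : |γ| < 1) :
    valueD γ P p r μ =
      μ ᵥ* (1 - γ • transitionMatrix P p)⁻¹ ⬝ᵥ fun s => p s ⬝ᵥ r s := by
  simp only [valueD, expReward_eq_dotProduct, stateDist_eq_vecMul_pow]
  exact (hasSum_pow_mul_vecMul_pow_dotProduct
    (transitionMatrix_mem_rowStochastic hP hp) hγ _ _).tsum_eq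

lemma valueV_eq_inv_mulVec (hP : ∀ s a, P s a ∈ stdSimplex ℝ S) (hp : ∀ s, p s ∈ stdSimplex ℝ A)
    (hγ : |γ| < 1) :
    valueV γ P p r = (1 - γ • transitionMatrix P p)⁻¹ *ᵥ fun s => p s ⬝ᵥ r s := by
  ext s
  have hdirac : diracD s = Pi.single s 1 := by
    ext s'
    simp [diracD, Pi.single_apply]
  rw [valueV, valueD_eq_vecMul_inv_dotProduct hP hp hγ, ← dotProduct_mulVec, hdirac,
    single_one_dotProduct]

lemma valueD_eq_dotProduct_valueV (hP : ∀ s a, P s a ∈ stdSimplex ℝ S)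
    (hp : ∀ s, p s ∈ stdSimplex ℝ A) (hγ : |γ| < 1) :
    valueD γ P p r μ = μ ⬝ᵥ valueV γ P p r := by
  rw [valueD_eq_vecMul_inv_dotProduct hP hp hγ, valueV_eq_inv_mulVec hP hp hγ, dotProduct_mulVec]

lemma occup_vecMul (hP : ∀ s a, P s a ∈ stdSimplex ℝ S) (hp : ∀ s, p s ∈ stdSimplex ℝ A)
    (hγ : |γ| < 1) :
    occup γ P p μ ᵥ* (1 - γ • transitionMatrix P p) = (1 - γ) • μ := by
  have hunit := isUnit_one_sub_smul_of_mem_rowStochastic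
    (transitionMatrix_mem_rowStochastic hP hp) hγ
  rw [occup_eq_vecMul_inv hP hp hγ, smul_vecMul, vecMul_vecMul,
    nonsing_inv_mul _ ((isUnit_iff_isUnit_det _).1 hunit), vecMul_one]

lemma mulVec_valueV (hP : ∀ s a, P s a ∈ stdSimplex ℝ S) (hp : ∀ s, p s ∈ stdSimplex ℝ A)
    (hγ : |γ| < 1) :
    (1 - γ • transitionMatrix P p) *ᵥ valueV γ P p r = fun s => p s ⬝ᵥ r s := by
  have hunit := isUnit_one_sub_smul_of_mem_rowStochastic
    (transitionMatrix_mem_rowStochastic hP hp) hγ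
  rw [valueV_eq_inv_mulVec hP hp hγ, mulVec_mulVec,
    mul_nonsing_inv _ ((isUnit_iff_isUnit_det _).1 hunit), one_mulVec]

lemma dotProduct_valueQ (s : S) :
    p s ⬝ᵥ valueQ γ P q r s =
      p s ⬝ᵥ r s + γ * (transitionMatrix P p *ᵥ valueV γ P q r) s := by
  rw [transitionMatrix_mulVec]
  simp only [valueQ, dotProduct, mul_add, sum_add_distrib, mul_sum]
  simp only [mul_left_comm]

lemma dotProduct_advantage (hP : ∀ s a, P s a ∈ stdSimplex ℝ S) (hp : ∀ s, p s ∈ stdSimplex ℝ A)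
    (hγ : |γ| < 1) :
    (fun s => p s ⬝ᵥ advantage γ P q r s) =
      (1 - γ • transitionMatrix P p) *ᵥ (valueV γ P p r - valueV γ P q r) := by
  rw [mulVec_sub, mulVec_valueV hP hp hγ]
  ext s
  have hsplit : p s ⬝ᵥ advantage γ P q r s = p s ⬝ᵥ valueQ γ P q r s - valueV γ P q r s := by
    simp [advantage, dotProduct, mul_sub, sum_sub_distrib, ← sum_mul, (hp s).2]
  rw [hsplit, dotProduct_valueQ]
  simp only [sub_mulVec, one_mulVec, smul_mulVec, Pi.sub_apply, Pi.smul_apply, smul_eq_mul]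
  ring

lemma dotProduct_advantage_self (hP : ∀ s a, P s a ∈ stdSimplex ℝ S)
    (hp : ∀ s, p s ∈ stdSimplex ℝ A) (hγ : |γ| < 1) (s : S) :
    p s ⬝ᵥ advantage γ P p r s = 0 := by
  simpa using congrFun (dotProduct_advantage (q := p) (r := r) hP hp hγ) s

theorem performance_difference (hP : ∀ s a, P s a ∈ stdSimplex ℝ S)
    (hp : ∀ s, p s ∈ stdSimplex ℝ A) (hq : ∀ s, q s ∈ stdSimplex ℝ A) (hγ : |γ| < 1) :
    valueD γ P p r μ - valueD γ P q r μ =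
      (1 - γ)⁻¹ * ∑ s, occup γ P p μ s * (p s ⬝ᵥ advantage γ P q r s) := by
  have hγ' : 1 - γ ≠ 0 := (sub_pos.2 (abs_lt.1 hγ).2).ne'
  calc valueD γ P p r μ - valueD γ P q r μ = μ ⬝ᵥ (valueV γ P p r - valueV γ P q r) := by
        rw [valueD_eq_dotProduct_valueV hP hp hγ, valueD_eq_dotProduct_valueV hP hq hγ,
          dotProduct_sub]
    _ = (1 - γ)⁻¹ * (((1 - γ) • μ) ⬝ᵥ (valueV γ P p r - valueV γ P q r)) := by
        rw [smul_dotProduct, smul_eq_mul, inv_mul_cancel_left₀ hγ']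
    _ = (1 - γ)⁻¹ * (occup γ P p μ ⬝ᵥ fun s => p s ⬝ᵥ advantage γ P q r s) := by
        rw [← occup_vecMul hP hp hγ, dotProduct_advantage hP hp hγ, dotProduct_mulVec]

lemma one_sub_mul_le_occup (hP : ∀ s a, P s a ∈ stdSimplex ℝ S) (hp : ∀ s, p s ∈ stdSimplex ℝ A)
    (hγ0 : 0 ≤ γ) (hγ1 : γ < 1) (hμ : ∀ s, 0 ≤ μ s) (s : S) :
    (1 - γ) * μ s ≤ occup γ P p μ s := by
  have hdist (t : ℕ) : 0 ≤ stateDist P p μ t s := by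
    rw [stateDist_eq_vecMul_pow]
    exact nonneg_vecMul_of_mem_rowStochastic
      (pow_mem (transitionMatrix_mem_rowStochastic hP hp) t) hμ s
  refine mul_le_mul_of_nonneg_left ?_ (sub_pos.2 hγ1).le
  have hsum := (hasSum_stateDist hP hp (abs_lt.2 ⟨by linarith, hγ1⟩) μ s).summable
  simpa [stateDist] using
    hsum.le_tsum 0 fun t _ => mul_nonneg (pow_nonneg hγ0 t) (hdist t)

lemma occup_nonneg (hP : ∀ s a, P s a ∈ stdSimplex ℝ S) (hp : ∀ s, p s ∈ stdSimplex ℝ A)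
    (hγ0 : 0 ≤ γ) (hγ1 : γ < 1) (hμ : ∀ s, 0 ≤ μ s) (s : S) : 0 ≤ occup γ P p μ s :=
  (mul_nonneg (sub_pos.2 hγ1).le (hμ s)).trans (one_sub_mul_le_occup hP hp hγ0 hγ1 hμ s)

lemma occup_pos (hP : ∀ s a, P s a ∈ stdSimplex ℝ S) (hp : ∀ s, p s ∈ stdSimplex ℝ A)
    (hγ0 : 0 ≤ γ) (hγ1 : γ < 1) (hμ : ∀ s, 0 < μ s) (s : S) : 0 < occup γ P p μ s :=
  (mul_pos (sub_pos.2 hγ1) (hμ s)).trans_le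
    (one_sub_mul_le_occup hP hp hγ0 hγ1 (fun s => (hμ s).le) s)

lemma continuousAt_occup {X : Type*} [TopologicalSpace X] {p : X → S → A → ℝ} {x : X}
    (hP : ∀ s a, P s a ∈ stdSimplex ℝ S) (hp : ∀ y s, p y s ∈ stdSimplex ℝ A) (hγ : |γ| < 1)
    (hcont : ContinuousAt p x) (s : S) : ContinuousAt (fun y => occup γ P (p y) μ s) x := by
  have hmatrix : ContinuousAt (fun y => 1 - γ • transitionMatrix P (p y)) x := by
    have hentry : Continuous (transitionMatrix P) :=
      continuous_matrix fun s s' => by unfold transitionMatrix; fun_prop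
    exact continuousAt_const.sub ((hentry.continuousAt.comp hcont).const_smul γ)
  have hunit := (isUnit_iff_isUnit_det _).1 <| isUnit_one_sub_smul_of_mem_rowStochastic
    (transitionMatrix_mem_rowStochastic hP (hp x)) hγ
  have hinv : ContinuousAt (fun y => (1 - γ • transitionMatrix P (p y))⁻¹) x :=
    (continuousAt_matrix_inv _ (NormedRing.inverse_continuousAt hunit.unit)).comp
      (f := fun y => 1 - γ • transitionMatrix P (p y)) hmatrix
  have hvecMul : Continuous fun N : Matrix S S ℝ => ((1 - γ) • (μ ᵥ* N)) s := by fun_prop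
  simp only [fun y => occup_eq_vecMul_inv (μ := μ) hP (hp y) hγ]
  exact hvecMul.continuousAt.comp (f := fun y => (1 - γ • transitionMatrix P (p y))⁻¹) hinv

theorem hasFDerivAt_valueD {E : Type*} [NormedAddCommGroup E] [NormedSpace ℝ E]
    {p : E → S → A → ℝ} {p' : S → A → E →L[ℝ] ℝ} {x : E} (hP : ∀ s a, P s a ∈ stdSimplex ℝ S)
    (hp : ∀ y s, p y s ∈ stdSimplex ℝ A) (hγ : |γ| < 1)
    (hp' : ∀ s a, HasFDerivAt (fun y => p y s a) (p' s a) x) :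
    HasFDerivAt (fun y => valueD γ P (p y) r μ)
      ((1 - γ)⁻¹ • ∑ s, occup γ P (p x) μ s • ∑ a, advantage γ P (p x) r s a • p' s a) x := by
  have hdiff (y : E) : valueD γ P (p y) r μ = valueD γ P (p x) r μ + (1 - γ)⁻¹ *
      ∑ s, occup γ P (p y) μ s * (p y s ⬝ᵥ advantage γ P (p x) r s) :=
    eq_add_of_sub_eq' (performance_difference hP (hp y) (hp x) hγ)
  have hadv (s : S) : HasFDerivAt (fun y => p y s ⬝ᵥ advantage γ P (p x) r s)
      (∑ a, advantage γ P (p x) r s a • p' s a) x :=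
    HasFDerivAt.fun_sum fun a _ => (hp' s a).mul_const _
  have hcont : ContinuousAt p x :=
    continuousAt_pi.2 fun s => continuousAt_pi.2 fun a => (hp' s a).continuousAt
  rw [funext hdiff]
  exact .const_add _ <| .const_mul (.fun_sum fun s _ => hasFDerivAt_smul_of_eq_zero
    (continuousAt_occup hP hp hγ hcont s) (hadv s) (dotProduct_advantage_self hP (hp x) hγ s)) _

end Occupancy

section Softmax

open Matrix

variable {S A : Type*} [Fintype A] [Nonempty A]

lemma sum_exp_pos (f : A → ℝ) : 0 < ∑ a, Real.exp (f a) :=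
  sum_pos (fun _ _ => Real.exp_pos _) univ_nonempty

lemma softmaxPol_pos (θ : S → A → ℝ) (s : S) (a : A) : 0 < softmaxPol θ s a :=
  div_pos (Real.exp_pos _) (sum_exp_pos _)

lemma softmaxPol_mem_stdSimplex (θ : S → A → ℝ) (s : S) : softmaxPol θ s ∈ stdSimplex ℝ A := by
  refine ⟨fun a => (softmaxPol_pos θ s a).le, ?_⟩
  simp only [softmaxPol, ← sum_div]
  exact div_self (sum_exp_pos _).ne'

lemma softmaxPol_eq_exp_sub_log (θ : S → A → ℝ) (s : S) (a : A) :
    softmaxPol θ s a = Real.exp (θ s a - Real.log (∑ b, Real.exp (θ s b))) := by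
  rw [Real.exp_sub, Real.exp_log (sum_exp_pos _), softmaxPol]

section Derivative

variable {E : Type*} [NormedAddCommGroup E] [NormedSpace ℝ E] {θ : E → S → A → ℝ} {x : E}

lemma hasFDerivAt_softmaxPol {s : S} {θ' : A → E →L[ℝ] ℝ}
    (hθ : ∀ a, HasFDerivAt (fun y => θ y s a) (θ' a) x) (a : A) :
    HasFDerivAt (fun y => softmaxPol (θ y) s a)
      (softmaxPol (θ x) s a • (θ' a - ∑ b, softmaxPol (θ x) s b • θ' b)) x := by
  have hZ : ∑ b, Real.exp (θ x s b) ≠ 0 := (sum_exp_pos (θ x s)).ne'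
  have hlog := (HasFDerivAt.fun_sum fun b (_ : b ∈ univ) => (hθ b).exp).log hZ
  simp only [softmaxPol_eq_exp_sub_log]
  refine ((hθ a).fun_sub hlog).exp.congr_fderiv ?_
  simp only [← softmaxPol_eq_exp_sub_log, softmaxPol, smul_sum, smul_smul, div_eq_inv_mul]

theorem hasFDerivAt_valueD_softmaxPol [Fintype S] {P : S → A → S → ℝ} {γ : ℝ} {r : S → A → ℝ}
    {μ : S → ℝ} {θ' : S → A → E →L[ℝ] ℝ} (hP : ∀ s a, P s a ∈ stdSimplex ℝ S) (hγ : |γ| < 1)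
    (hθ : ∀ s a, HasFDerivAt (fun y => θ y s a) (θ' s a) x) :
    HasFDerivAt (fun y => valueD γ P (softmaxPol (θ y)) r μ)
      ((1 - γ)⁻¹ • ∑ s, occup γ P (softmaxPol (θ x)) μ s •
        ∑ a, (softmaxPol (θ x) s a * advantage γ P (softmaxPol (θ x)) r s a) • θ' s a) x := by
  have hp (y : E) (s : S) := softmaxPol_mem_stdSimplex (θ y) s
  refine (hasFDerivAt_valueD hP hp hγ fun s a =>
    hasFDerivAt_softmaxPol (hθ s) a).congr_fderiv ?_
  congr! 3 with s
  have hbaseline : ∑ a, advantage γ P (softmaxPol (θ x)) r s a * softmaxPol (θ x) s a = 0 := by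
    simpa only [dotProduct, mul_comm] using dotProduct_advantage_self hP (hp x) hγ s
  simp only [smul_sub, smul_smul, sum_sub_distrib, ← sum_smul, hbaseline, zero_smul, sub_zero,
    mul_comm]

end Derivative

lemma fderiv_valueD_softmaxPol_single [Fintype S] [DecidableEq S] [DecidableEq A]
    {P : S → A → S → ℝ} {γ : ℝ} {r : S → A → ℝ} {μ : S → ℝ}
    (hP : ∀ s a, P s a ∈ stdSimplex ℝ S) (hγ : |γ| < 1) (θ : S → A → ℝ) (s : S) (a : A) :
    fderiv ℝ (fun θ' : S → A → ℝ => valueD γ P (softmaxPol θ') r μ) θ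
        (Pi.single s (Pi.single a 1)) =
      (1 - γ)⁻¹ * (occup γ P (softmaxPol θ) μ s *
        (softmaxPol θ s a * advantage γ P (softmaxPol θ) r s a)) := by
  let coord (s : S) (a : A) : (S → A → ℝ) →L[ℝ] ℝ :=
    (ContinuousLinearMap.proj (R := ℝ) (φ := fun _ : A => ℝ) a).comp
      (ContinuousLinearMap.proj (R := ℝ) (φ := fun _ : S => A → ℝ) s)
  rw [(hasFDerivAt_valueD_softmaxPol (θ := fun θ' => θ') (θ' := coord) hP hγ fun s a =>
    (coord s a).hasFDerivAt).fderiv]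
  have hcoord (s' : S) (b : A) : coord s' b (Pi.single s (Pi.single a 1)) =
      if s' = s then if b = a then 1 else 0 else 0 := by
    by_cases hs : s' = s
    · subst hs
      simp [coord, Pi.single_apply]
    · simp [coord, hs]
  simp [_root_.smul_apply, _root_.sum_apply, hcoord]

end Softmax

section Lojasiewicz

open Matrix

variable {S A : Type*}

lemma detPol_eq_single (f : S → A) (s : S) : detPol f s = Pi.single (f s) 1 := by
  ext a
  simp [detPol, Pi.single_apply]

variable [Fintype A]

lemma detPol_mem_stdSimplex (f : S → A) (s : S) : detPol f s ∈ stdSimplex ℝ A := by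
  rw [detPol_eq_single]
  exact single_mem_stdSimplex ℝ (f s)

variable [Fintype S] [Nonempty A] {P : S → A → S → ℝ} {r : S → A → ℝ} {γ : ℝ} {μ ρ : S → ℝ}

lemma valueD_detPol_sub_valueD_softmaxPol (hP : ∀ s a, P s a ∈ stdSimplex ℝ S) (hγ : |γ| < 1)
    (f : S → A) (θ : S → A → ℝ) :
    valueD γ P (detPol f) r ρ - valueD γ P (softmaxPol θ) r ρ =
      (1 - γ)⁻¹ * ∑ s, occup γ P (detPol f) ρ s * advantage γ P (softmaxPol θ) r s (f s) := by
  rw [performance_difference hP (detPol_mem_stdSimplex f) (softmaxPol_mem_stdSimplex θ) hγ]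
  simp [detPol_eq_single]

lemma iInf_mul_inv_iSup_mul_le_abs_fderiv [DecidableEq S] [DecidableEq A]
    (hP : ∀ s a, P s a ∈ stdSimplex ℝ S) (hγ0 : 0 ≤ γ) (hγ1 : γ < 1) (hμ : ∀ s, 0 < μ s)
    (hρ : ∀ s, 0 ≤ ρ s) (f : S → A) (θ : S → A → ℝ) (s : S) :
    (⨅ s, softmaxPol θ s (f s)) *
        (⨆ s, occup γ P (detPol f) ρ s / occup γ P (softmaxPol θ) μ s)⁻¹ *
        ((1 - γ)⁻¹ * (occup γ P (detPol f) ρ s * advantage γ P (softmaxPol θ) r s (f s))) ≤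
      |fderiv ℝ (fun θ' : S → A → ℝ => valueD γ P (softmaxPol θ') r μ) θ
        (Pi.single s (Pi.single (f s) 1))| := by
  have hγ : |γ| < 1 := abs_lt.2 ⟨by linarith, hγ1⟩
  have hθ := softmaxPol_mem_stdSimplex θ
  have hmin0 : 0 ≤ ⨅ s, softmaxPol θ s (f s) := Real.iInf_nonneg fun s => (hθ s).1 (f s)
  have hmin : ⨅ s, softmaxPol θ s (f s) ≤ softmaxPol θ s (f s) :=
    ciInf_le (Set.finite_range _).bddBelow s
  have hoccρ := occup_nonneg hP (detPol_mem_stdSimplex f) hγ0 hγ1 hρ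
  have hoccμ := occup_pos hP hθ hγ0 hγ1 hμ
  set m := ⨅ s, softmaxPol θ s (f s)
  set c := (⨆ s, occup γ P (detPol f) ρ s / occup γ P (softmaxPol θ) μ s)⁻¹
  have hratio0 : 0 ≤ c * occup γ P (detPol f) ρ s :=
    mul_nonneg (inv_nonneg.2 (Real.iSup_nonneg fun s => div_nonneg (hoccρ s) (hoccμ s).le))
      (hoccρ s)
  have hratio : c * occup γ P (detPol f) ρ s ≤ occup γ P (softmaxPol θ) μ s :=
    inv_iSup_div_mul_le hoccρ hoccμ s
  rw [fderiv_valueD_softmaxPol_single hP hγ, abs_mul, abs_mul, abs_mul,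
    abs_of_pos (inv_pos.2 (sub_pos.2 hγ1)), abs_of_pos (hoccμ s), abs_of_pos (softmaxPol_pos θ s _)]
  calc m * c * ((1 - γ)⁻¹ *
          (occup γ P (detPol f) ρ s * advantage γ P (softmaxPol θ) r s (f s)))
      = (1 - γ)⁻¹ * (c * occup γ P (detPol f) ρ s *
          (m * advantage γ P (softmaxPol θ) r s (f s))) := by ring
    _ ≤ (1 - γ)⁻¹ * (c * occup γ P (detPol f) ρ s *
          (m * |advantage γ P (softmaxPol θ) r s (f s)|)) := by
        gcongr
        exact le_abs_self _
    _ ≤ (1 - γ)⁻¹ * (occup γ P (softmaxPol θ) μ s *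
          (softmaxPol θ s (f s) * |advantage γ P (softmaxPol θ) r s (f s)|)) := by
        gcongr
        exact (hoccμ s).le

theorem nonuniform_lojasiewicz_general [Nonempty S] [DecidableEq S] [DecidableEq A]
    (hP : ∀ s a, P s a ∈ stdSimplex ℝ S) (hγ0 : 0 ≤ γ) (hγ1 : γ < 1) (hμ : ∀ s, 0 < μ s)
    (hρ : ∀ s, 0 ≤ ρ s) (f : S → A) (θ : S → A → ℝ) :
    (⨅ s : S, softmaxPol θ s (f s)) *
        (⨆ s : S, occup γ P (detPol f) ρ s / occup γ P (softmaxPol θ) μ s)⁻¹ *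
        ((valueD γ P (detPol f) r ρ - valueD γ P (softmaxPol θ) r ρ) /
          Real.sqrt (Fintype.card S))
      ≤ Real.sqrt (∑ s : S, ∑ a : A,
          (fderiv ℝ (fun θ' : S → A → ℝ => valueD γ P (softmaxPol θ') r μ) θ
            (Pi.single s (Pi.single a 1))) ^ 2) := by
  have hγ : |γ| < 1 := abs_lt.2 ⟨by linarith, hγ1⟩
  rw [← mul_div_assoc, div_le_iff₀' (Real.sqrt_pos.2 (Nat.cast_pos.2 Fintype.card_pos)),
    valueD_detPol_sub_valueD_softmaxPol hP hγ, mul_sum, mul_sum]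
  exact (sum_le_sum fun s _ =>
    iInf_mul_inv_iSup_mul_le_abs_fderiv hP hγ0 hγ1 hμ hρ f θ s).trans
    (sum_abs_apply_le_sqrt_card_mul_sqrt (fun s a => fderiv ℝ
      (fun θ' : S → A → ℝ => valueD γ P (softmaxPol θ') r μ) θ (Pi.single s (Pi.single a 1))) f)

end Lojasiewicz

/-- Non-uniform Łojasiewicz inequality for the tabular softmax policy:
`‖∇_θ V^{π_θ}(μ)‖₂ ≥ min_s π_θ(a*(s)|s) · ‖d_ρ^{π*}/d_μ^{π_θ}‖_∞⁻¹ · (V*(ρ) − V^{π_θ}(ρ))/√|S|`. -/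
theorem nonuniform_lojasiewicz
    {S A : Type*} [Fintype S] [Nonempty S] [DecidableEq S]
    [Fintype A] [Nonempty A] [DecidableEq A]
    (P : S → A → S → ℝ)
    (hP0 : ∀ s a s', 0 ≤ P s a s') (hP1 : ∀ s a, ∑ s', P s a s' = 1)
    (r : S → A → ℝ) (hr0 : ∀ s a, 0 ≤ r s a) (hr1 : ∀ s a, r s a ≤ 1)
    (γ : ℝ) (hγ0 : 0 < γ) (hγ1 : γ < 1)
    (μ : S → ℝ) (hμ0 : ∀ s, 0 < μ s) (hμ1 : ∑ s, μ s = 1)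
    (ρ : S → ℝ) (hρ0 : ∀ s, 0 < ρ s) (hρ1 : ∑ s, ρ s = 1)
    -- π* is an optimal deterministic policy, with unique optimal action a*(s)
    (astar : S → A)
    (hopt : ∀ p : S → A → ℝ, (∀ s a, 0 ≤ p s a) → (∀ s, ∑ a, p s a = 1) →
      ∀ ρ' : S → ℝ, (∀ s, 0 ≤ ρ' s) → (∑ s, ρ' s = 1) →
        valueD γ P p r ρ' ≤ valueD γ P (detPol astar) r ρ')
    (huniq : ∀ s a, a ≠ astar s →
      r s a + γ * ∑ s', P s a s' * valueV γ P (detPol astar) r s'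
        < r s (astar s) + γ * ∑ s', P s (astar s) s' * valueV γ P (detPol astar) r s')
    (θ : S → A → ℝ) :
    (⨅ s : S, softmaxPol θ s (astar s)) *
        (⨆ s : S, occup γ P (detPol astar) ρ s / occup γ P (softmaxPol θ) μ s)⁻¹ *
        ((valueD γ P (detPol astar) r ρ - valueD γ P (softmaxPol θ) r ρ) /
          Real.sqrt (Fintype.card S))
      ≤ Real.sqrt (∑ s : S, ∑ a : A,
          (fderiv ℝ (fun θ' : S → A → ℝ => valueD γ P (softmaxPol θ') r μ) θ
            (Pi.single s (Pi.single a 1))) ^ 2) :=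
  nonuniform_lojasiewicz_general (fun s a => ⟨hP0 s a, hP1 s a⟩) hγ0.le hγ1 hμ0
    (fun s => (hρ0 s).le) astar θ
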